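/- Casimir product identity in U_q(sl_2) (identity (e-id)): The element C is central in the unital subalgebra generated by E, F, K, K⁻¹; one has C = FE + (qK + q⁻¹K⁻¹)/(q − q⁻¹)²; and for every j ≥ 0: EʲFʲ = ∏_{i=0}^{j−1} ( C − (q^{2i+1}K⁻¹ + q^{−2i−1}K)/(q − q⁻¹)² ), where the factors commute pairwise (so the product is unambiguous). -/

import Mathlib

/-! With `D n = (q^(2n+1) K⁻¹ + q^(-2n-1) K) / (q - q⁻¹)²` for `n : ℤ`, the Casimir element has the
two expressions `C = E F + D 0 = F E + D (-1)`. The `q`-commutation relations shift the index,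
`D n * E = E * D (n - 1)` and `D n * F = F * D (n + 1)`, so that
`C E = E F E + D 0 * E = E (F E + D (-1)) = E C`, and symmetrically for `F`. In the product
`E^(j+1) F^(j+1) = E^j (C - D 0) F^j` the middle factor then moves past `F^j` and becomes `C - D j`.
-/

noncomputable section
namespace Dyn

theorem pow_mul_pow_eq_prod_range_of_semiconjBy {M : Type*} [Monoid M] {x y : M} {a : ℕ → M}
    (h_zero : x * y = a 0) (h_shift : ∀ i, SemiconjBy y (a (i + 1)) (a i)) (j : ℕ) :
    x ^ j * y ^ j = ((List.range j).map a).prod := by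
  have h_pow : ∀ j, SemiconjBy (y ^ j) (a j) (a 0) := by
    intro j
    induction j with
    | zero => simp
    | succ j ih => simpa only [pow_succ] using ih.mul_left (h_shift j)
  induction j with
  | zero => simp
  | succ j ih =>
    calc x ^ (j + 1) * y ^ (j + 1)
        = x ^ j * (x * y) * y ^ j := by rw [pow_succ, pow_succ']; simp only [mul_assoc]
      _ = x ^ j * y ^ j * a j := by rw [h_zero, mul_assoc, ← (h_pow j).eq, mul_assoc]
      _ = ((List.range (j + 1)).map a).prod := by rw [ih, List.prod_range_succ]

section Conjugation

variable {α M : Type*} [Monoid M]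

theorem semiconjBy_smul_unit_of_conj_eq_smul [SMul α M] [SMulCommClass α M M]
    [IsScalarTower α M M] {u : Mˣ} {x : M} {c : α} (h : u * x * ↑u⁻¹ = c • x) :
    SemiconjBy x (c • (u : M)) u := by
  rw [SemiconjBy, mul_smul_comm, ← smul_mul_assoc, ← h, Units.inv_mul_cancel_right]

theorem semiconjBy_smul_unit_inv_of_conj_eq_smul [GroupWithZero α] [MulAction α M]
    [SMulCommClass α M M] {u : Mˣ} {x : M} {c : α} (hc : c ≠ 0) (h : u * x * ↑u⁻¹ = c • x) :
    SemiconjBy x (c⁻¹ • (↑u⁻¹ : M)) ↑u⁻¹ := by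
  have h_inv : x * ↑u⁻¹ = c • (↑u⁻¹ * x) := by
    rw [← mul_smul_comm, ← h, mul_assoc, Units.inv_mul_cancel_left]
  rw [SemiconjBy, mul_smul_comm, h_inv, inv_smul_smul₀ hc]

end Conjugation

section Casimir

variable {k R : Type*} [Field k] [Ring R] [Algebra k R]

/-- Elements `E`, `F`, `K` of a `k`-algebra satisfying the defining relations of `U_q(sl₂)`, that
is, the images of the generators under a representation. That `K` is invertible is encoded by
taking it in `Rˣ`. -/
structure IsQuantumSl2Triple (q : k) (E F : R) (K : Rˣ) : Prop where
  q_ne_zero : q ≠ 0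
  q_sq_ne_one : q ^ 2 ≠ 1
  conj_E : K * E * ↑K⁻¹ = q ^ 2 • E
  conj_F : K * F * ↑K⁻¹ = q ^ (-2 : ℤ) • F
  E_mul_F_sub_F_mul_E : E * F - F * E = (q - q⁻¹)⁻¹ • ((K : R) - ↑K⁻¹)

/-- The quantum Casimir element `C` of `U_q(sl₂)`. -/
def casimir (q : k) (E F : R) (K : Rˣ) : R :=
  E * F + (q⁻¹ / (q - q⁻¹) ^ 2) • (K : R) + (q / (q - q⁻¹) ^ 2) • (↑K⁻¹ : R)

/-- The element `D n` of the Cartan part subtracted from `C` in the `n`-th factor of `Eʲ Fʲ`. The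
index is an integer because `n = 0` and `n = -1` give the Cartan parts of the Casimir element
relative to `E * F` and to `F * E`. -/
def cartanPart (q : k) (K : Rˣ) (n : ℤ) : R :=
  (q ^ (2 * n + 1) / (q - q⁻¹) ^ 2) • (↑K⁻¹ : R) + (q ^ (-(2 * n) - 1) / (q - q⁻¹) ^ 2) • (K : R)

theorem cartanPart_zero (q : k) (K : Rˣ) :
    cartanPart q K 0 =
      (q⁻¹ / (q - q⁻¹) ^ 2) • (K : R) + (q / (q - q⁻¹) ^ 2) • (↑K⁻¹ : R) := by
  simp [cartanPart, add_comm]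

theorem cartanPart_neg_one (q : k) (K : Rˣ) :
    cartanPart q K (-1) =
      (q / (q - q⁻¹) ^ 2) • (K : R) + (q⁻¹ / (q - q⁻¹) ^ 2) • (↑K⁻¹ : R) := by
  norm_num [cartanPart, add_comm]

theorem commute_cartanPart {x : R} {K : Rˣ} (h : Commute x K) (q : k) (n : ℤ) :
    Commute x (cartanPart q K n) :=
  (h.units_inv_right.smul_right _).add_right (h.smul_right _)

theorem semiconjBy_cartanPart_of_conj_eq_zpow_smul {q : k} (hq : q ≠ 0) {K : Rˣ} {x : R} {m : ℤ}
    (h : K * x * ↑K⁻¹ = q ^ (2 * m) • x) (n : ℤ) :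
    SemiconjBy x (cartanPart q K (n - m)) (cartanPart q K n) := by
  have hK := (semiconjBy_smul_unit_of_conj_eq_smul h).eq
  have hK_inv := (semiconjBy_smul_unit_inv_of_conj_eq_smul (zpow_ne_zero _ hq) h).eq
  have h_exp_inv : q ^ (2 * (n - m) + 1) = q ^ (2 * n + 1) * (q ^ (2 * m))⁻¹ := by
    rw [← zpow_neg, ← zpow_add₀ hq]; ring_nf
  have h_exp : q ^ (-(2 * (n - m)) - 1) = q ^ (-(2 * n) - 1) * q ^ (2 * m) := by
    rw [← zpow_add₀ hq]; ring_nf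
  rw [SemiconjBy, cartanPart, cartanPart, h_exp, h_exp_inv, add_mul, smul_mul_assoc,
    smul_mul_assoc, ← hK, ← hK_inv, mul_add]
  simp only [mul_smul_comm, smul_smul, div_mul_eq_mul_div]

theorem casimir_eq_E_mul_F_add_cartanPart (q : k) (E F : R) (K : Rˣ) :
    casimir q E F K = E * F + cartanPart q K 0 := by
  rw [casimir, cartanPart_zero, add_assoc]

namespace IsQuantumSl2Triple

variable {q : k} {E F : R} {K : Rˣ}

theorem sub_inv_ne_zero (h : IsQuantumSl2Triple q E F K) : q - q⁻¹ ≠ 0 := by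
  rw [sub_ne_zero, Ne, ← mul_eq_one_iff_eq_inv₀ h.q_ne_zero, ← sq]
  exact h.q_sq_ne_one

theorem casimir_eq_F_mul_E_add (h : IsQuantumSl2Triple q E F K) :
    casimir q E F K =
      F * E + (q / (q - q⁻¹) ^ 2) • (K : R) + (q⁻¹ / (q - q⁻¹) ^ 2) • (↑K⁻¹ : R) := by
  have h_EF : E * F = F * E + (q - q⁻¹)⁻¹ • ((K : R) - ↑K⁻¹) :=
    sub_eq_iff_eq_add'.mp h.E_mul_F_sub_F_mul_E
  have h_coeff : (q - q⁻¹)⁻¹ = q / (q - q⁻¹) ^ 2 - q⁻¹ / (q - q⁻¹) ^ 2 := by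
    rw [← sub_div, sq, div_mul_cancel_left₀ h.sub_inv_ne_zero]
  rw [casimir, h_EF, h_coeff]
  module

theorem casimir_eq_F_mul_E_add_cartanPart (h : IsQuantumSl2Triple q E F K) :
    casimir q E F K = F * E + cartanPart q K (-1) := by
  rw [h.casimir_eq_F_mul_E_add, cartanPart_neg_one, add_assoc]

theorem semiconjBy_E_cartanPart (h : IsQuantumSl2Triple q E F K) (n : ℤ) :
    SemiconjBy E (cartanPart q K (n - 1)) (cartanPart q K n) :=
  semiconjBy_cartanPart_of_conj_eq_zpow_smul h.q_ne_zero (by exact_mod_cast h.conj_E) n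

theorem semiconjBy_F_cartanPart (h : IsQuantumSl2Triple q E F K) (n : ℤ) :
    SemiconjBy F (cartanPart q K (n + 1)) (cartanPart q K n) := by
  simpa only [sub_neg_eq_add] using
    semiconjBy_cartanPart_of_conj_eq_zpow_smul (m := -1) h.q_ne_zero h.conj_F n

theorem commute_casimir_E (h : IsQuantumSl2Triple q E F K) : Commute (casimir q E F K) E :=
  calc casimir q E F K * E
      = E * F * E + cartanPart q K 0 * E := by rw [casimir_eq_E_mul_F_add_cartanPart, add_mul]
    _ = E * (F * E + cartanPart q K (-1)) := by
      rw [← (h.semiconjBy_E_cartanPart 0).eq, zero_sub, mul_add, mul_assoc]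
    _ = E * casimir q E F K := by rw [h.casimir_eq_F_mul_E_add_cartanPart]

theorem commute_casimir_F (h : IsQuantumSl2Triple q E F K) : Commute (casimir q E F K) F :=
  calc casimir q E F K * F
      = F * E * F + cartanPart q K (-1) * F := by rw [h.casimir_eq_F_mul_E_add_cartanPart, add_mul]
    _ = F * (E * F + cartanPart q K 0) := by
      rw [← (h.semiconjBy_F_cartanPart (-1)).eq, neg_add_cancel, mul_add, mul_assoc]
    _ = F * casimir q E F K := by rw [casimir_eq_E_mul_F_add_cartanPart]

theorem commute_E_mul_F_K (h : IsQuantumSl2Triple q E F K) : Commute (E * F) (K : R) := by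
  have h_scalar : q ^ 2 * q ^ (-2 : ℤ) = 1 := by
    rw [zpow_neg, zpow_ofNat, mul_inv_cancel₀ (pow_ne_zero 2 h.q_ne_zero)]
  have h_semiconj := (semiconjBy_smul_unit_of_conj_eq_smul h.conj_E).mul_left
    ((semiconjBy_smul_unit_of_conj_eq_smul h.conj_F).smul_right (q ^ 2))
  rwa [smul_smul, h_scalar, one_smul] at h_semiconj

theorem commute_casimir_K (h : IsQuantumSl2Triple q E F K) :
    Commute (casimir q E F K) (K : R) := by
  rw [casimir_eq_E_mul_F_add_cartanPart]
  exact h.commute_E_mul_F_K.add_left (commute_cartanPart (Commute.refl _) q 0).symm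

theorem commute_casimir_of_mem_adjoin (h : IsQuantumSl2Triple q E F K) {x : R}
    (hx : x ∈ Algebra.adjoin k ({E, F, ↑K, ↑K⁻¹} : Set R)) : Commute (casimir q E F K) x := by
  refine Algebra.commute_of_mem_adjoin_of_forall_mem_commute hx ?_
  rintro y (rfl | rfl | rfl | rfl)
  exacts [h.commute_casimir_E, h.commute_casimir_F, h.commute_casimir_K,
    h.commute_casimir_K.units_inv_right]

theorem E_pow_mul_F_pow (h : IsQuantumSl2Triple q E F K) (j : ℕ) :
    E ^ j * F ^ j =
      ((List.range j).map fun i : ℕ => casimir q E F K - cartanPart q K i).prod := by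
  have h_zero : E * F = casimir q E F K - cartanPart q K (0 : ℕ) :=
    eq_sub_of_add_eq (casimir_eq_E_mul_F_add_cartanPart q E F K).symm
  have h_shift (i : ℕ) : SemiconjBy F (casimir q E F K - cartanPart q K (i + 1 : ℕ))
      (casimir q E F K - cartanPart q K i) :=
    SemiconjBy.sub_right h.commute_casimir_F.symm (h.semiconjBy_F_cartanPart i)
  exact pow_mul_pow_eq_prod_range_of_semiconjBy h_zero h_shift j

theorem commute_casimir_sub_cartanPart (h : IsQuantumSl2Triple q E F K) (m n : ℤ) :
    Commute (casimir q E F K - cartanPart q K m) (casimir q E F K - cartanPart q K n) := by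
  have h_casimir (n : ℤ) : Commute (casimir q E F K) (cartanPart q K n) :=
    commute_cartanPart h.commute_casimir_K q n
  have h_cartan : Commute (cartanPart q K m : R) (cartanPart q K n) :=
    commute_cartanPart (commute_cartanPart (Commute.refl _) q m).symm q n
  exact ((Commute.refl _).sub_right (h_casimir n)).sub_left
    ((h_casimir m).symm.sub_right h_cartan)

end IsQuantumSl2Triple

theorem casimir_product_identity_general {q : k} {E F : R} {K : Rˣ}
    (h : IsQuantumSl2Triple q E F K) :
    (∀ x ∈ Algebra.adjoin k ({E, F, ↑K, ↑K⁻¹} : Set R), Commute (casimir q E F K) x) ∧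
    casimir q E F K =
      F * E + (q / (q - q⁻¹) ^ 2) • (K : R) + (q⁻¹ / (q - q⁻¹) ^ 2) • (↑K⁻¹ : R) ∧
    (∀ j : ℕ, E ^ j * F ^ j =
      ((List.range j).map fun i : ℕ => casimir q E F K - cartanPart q K i).prod) ∧
    (∀ i i' : ℕ, Commute (casimir q E F K - cartanPart q K i)
      (casimir q E F K - cartanPart q K i')) :=
  ⟨fun _ => h.commute_casimir_of_mem_adjoin, h.casimir_eq_F_mul_E_add, h.E_pow_mul_F_pow,
    fun i i' => h.commute_casimir_sub_cartanPart i i'⟩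

end Casimir

/-- **Casimir product identity in U_q(sl₂)** (identity (e-id)): the Casimir element
C = EF + (q⁻¹K + qK⁻¹)/(q−q⁻¹)² commutes with E, F, K, K⁻¹ (hence is central in the
subalgebra they generate), equals FE + (qK + q⁻¹K⁻¹)/(q−q⁻¹)², and
E^j F^j = ∏_{i=0}^{j−1} (C − (q^{2i+1}K⁻¹ + q^{−2i−1}K)/(q−q⁻¹)²), the factors of the
product commuting pairwise. -/
theorem casimir_product_identity
    (q : ℂ) (hq0 : q ≠ 0) (hq2 : q ^ 2 ≠ 1)
    (R : Type*) [Ring R] [Algebra ℂ R] (E F K Kinv : R)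
    (hK : K * Kinv = 1) (hK' : Kinv * K = 1)
    (hKE : K * E * Kinv = (q ^ 2) • E)
    (hKF : K * F * Kinv = (q ^ (-2 : ℤ)) • F)
    (hEF : E * F - F * E = (q - q⁻¹)⁻¹ • (K - Kinv)) :
    let C : R := E * F + (q⁻¹ / (q - q⁻¹) ^ 2) • K + (q / (q - q⁻¹) ^ 2) • Kinv
    let D : ℕ → R := fun i =>
      (q ^ (2 * (i : ℤ) + 1) / (q - q⁻¹) ^ 2) • Kinv +
        (q ^ (-(2 * (i : ℤ)) - 1) / (q - q⁻¹) ^ 2) • K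
    (∀ x ∈ Algebra.adjoin ℂ ({E, F, K, Kinv} : Set R), C * x = x * C) ∧
    C = F * E + (q / (q - q⁻¹) ^ 2) • K + (q⁻¹ / (q - q⁻¹) ^ 2) • Kinv ∧
    (∀ j : ℕ, E ^ j * F ^ j = ((List.range j).map (fun i => C - D i)).prod) ∧
    (∀ i i' : ℕ, (C - D i) * (C - D i') = (C - D i') * (C - D i)) :=
  casimir_product_identity_general (K := ⟨K, Kinv, hK, hK'⟩) ⟨hq0, hq2, hKE, hKF, hEF⟩

end Dyn
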